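/- arXiv:1205.2956 — 2 statements merged into one kernel-verified Lean document; each statement's English description precedes it below -/
import Mathlib

section
/- Let r ≥ 0, s > 0, u > 0 be fixed integers and let Q(t) be a nonzero polynomial with positive integer coefficients, and for each sufficiently large natural number m let λ_m > 1 denote the unique real root greater than 1 of P_m(t) = t^{2m+r+s} − t^{2m+r} − Q(t)·t^m − t^u + 1. Then for any real numbers q > 0 and v, the limit as m → ∞ of ((q·m + v) · log λ_m)/(log(q·m + v)) equals q. -/
open Polynomial Filter Real

/-!
Put `L = log λ_m`. The equation `P_m(λ_m) = 0` reads
`λ^(2m+r) (λ^s - 1) = Q(λ) λ^m + λ^u - 1`. For `λ > 1` one has `L ≤ λ^s - 1 ≤ s L λ^s` and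
`1 ≤ Q(1) ≤ Q(λ) ≤ Q(1) λ^d` with `d = deg Q`. Hence `1 ≤ s L λ^(m+r+s)` and, once `m ≥ u`,
`L λ^m ≤ (Q(1) + 1) λ^d`. Taking logarithms with `y = m L`, these become
`log m - log s - log y ≤ y (1 + (r+s)/m)` (`root_lower`) and
`y (1 - d/m) + log y ≤ log m + log (Q(1) + 1)` (`root_upper`).
The second bounds `y / log m` above by a quantity tending to `1`; in particular `y ≤ 2 log m`
eventually, so `log y = o(log m)` and the first bounds `y / log m` below by a quantity tending
to `1`. Thus `m L / log m → 1` (`tendsto_of_bounds`), and replacing `m` by `q m + v` multiplies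
the limit by `q`.
-/

/-- The lower bound comes from the leading term, whose coefficient is a positive integer; the upper
bound from `x ^ i ≤ x ^ natDegree` in each term. -/
lemma eval_bounds (Q : Polynomial ℝ) (hQ : Q ≠ 0)
    (hQc : ∀ i : ℕ, ∃ n : ℕ, Q.coeff i = (n : ℝ)) (x : ℝ) (hx : 1 ≤ x) :
    1 ≤ Q.eval x ∧ 0 ≤ Q.eval 1 ∧ Q.eval x ≤ Q.eval 1 * x ^ Q.natDegree := by
  have hc : ∀ i, 0 ≤ Q.coeff i := fun i => by
    obtain ⟨n, hn⟩ := hQc i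
    rw [hn]; positivity
  have hlead : 1 ≤ Q.coeff Q.natDegree := by
    obtain ⟨n, hn⟩ := hQc Q.natDegree
    have h0 : Q.coeff Q.natDegree ≠ 0 := by simpa using hQ
    rw [hn] at h0 ⊢
    have : n ≠ 0 := by exact_mod_cast h0
    exact_mod_cast Nat.one_le_iff_ne_zero.mpr this
  have hx0 : 0 ≤ x := by linarith
  refine ⟨?_, ?_, ?_⟩
  · rw [Polynomial.eval_eq_sum_range]
    calc (1 : ℝ) ≤ Q.coeff Q.natDegree * x ^ Q.natDegree :=
          one_le_mul_of_one_le_of_one_le hlead (one_le_pow₀ hx)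
      _ ≤ _ := Finset.single_le_sum (f := fun i => Q.coeff i * x ^ i)
          (fun i _ => mul_nonneg (hc i) (pow_nonneg hx0 i)) (by simp)
  · rw [Polynomial.eval_eq_sum_range]
    exact Finset.sum_nonneg fun i _ => by simpa using hc i
  · rw [Polynomial.eval_eq_sum_range, Polynomial.eval_eq_sum_range, Finset.sum_mul]
    refine Finset.sum_le_sum fun i hi => ?_
    have : x ^ i ≤ x ^ Q.natDegree :=
      pow_le_pow_right₀ hx (by simpa [Nat.lt_succ_iff] using hi)
    simpa using mul_le_mul_of_nonneg_left this (hc i)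

lemma root_lower (r s u m : ℕ) (hs : 0 < s) (hm : 0 < m) (x A : ℝ) (hx : 1 < x) (hA : 1 ≤ A)
    (h : x ^ (2 * m + r + s) - x ^ (2 * m + r) - A * x ^ m - x ^ u + 1 = 0) :
    Real.log m - Real.log s - Real.log (m * Real.log x) ≤ (m + (r + s)) * Real.log x := by
  have hx0 : 0 < x := by linarith
  have hL : 0 < Real.log x := Real.log_pos hx
  have hm' : (0 : ℝ) < m := by exact_mod_cast hm
  have hs' : (0 : ℝ) < s := by exact_mod_cast hs
  have hpow : 0 < x ^ s := by positivity
  -- `1 - x⁻ˢ ≤ log (xˢ)`, cleared of the denominator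
  have h1 : x ^ s - 1 ≤ s * Real.log x * x ^ s := by
    have := Real.one_sub_inv_le_log_of_pos hpow
    rw [Real.log_pow] at this
    have h2 := mul_le_mul_of_nonneg_right this hpow.le
    rwa [sub_mul, inv_mul_cancel₀ hpow.ne', one_mul] at h2
  have hu : 1 ≤ x ^ u := one_le_pow₀ hx.le
  have hxm : 0 < x ^ m := by positivity
  have h3 : x ^ m * 1 ≤ x ^ m * (s * Real.log x * x ^ (m + r + s)) := by
    have e1 : x ^ (2 * m + r + s) - x ^ (2 * m + r) = x ^ (2 * m + r) * (x ^ s - 1) := by ring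
    have e2 : x ^ m * (s * Real.log x * x ^ (m + r + s))
        = x ^ (2 * m + r) * (s * Real.log x * x ^ s) := by ring
    have h4 : x ^ (2 * m + r) * (x ^ s - 1) ≤ x ^ (2 * m + r) * (s * Real.log x * x ^ s) :=
      mul_le_mul_of_nonneg_left h1 (by positivity)
    have h5 : x ^ m ≤ A * x ^ m := le_mul_of_one_le_left hxm.le hA
    rw [e2]; linarith
  have h6 := Real.log_le_log one_pos (le_of_mul_le_mul_left h3 hxm)
  rw [Real.log_one, Real.log_mul (by positivity) (by positivity),
    Real.log_mul (by positivity) (by positivity), Real.log_pow] at h6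
  rw [Real.log_mul (by positivity) (by positivity)]
  push_cast at h6
  linarith

lemma root_upper (r s u m d : ℕ) (hs : 0 < s) (hm : 0 < m) (hum : u ≤ m) (x A B : ℝ)
    (hx : 1 < x) (hB : 0 ≤ B) (hA : A ≤ B * x ^ d)
    (h : x ^ (2 * m + r + s) - x ^ (2 * m + r) - A * x ^ m - x ^ u + 1 = 0) :
    (m - d) * Real.log x + Real.log (m * Real.log x) ≤ Real.log m + Real.log (B + 1) := by
  have hx0 : 0 < x := by linarith
  have hL : 0 < Real.log x := Real.log_pos hx
  have hm' : (0 : ℝ) < m := by exact_mod_cast hm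
  have h1 : Real.log x ≤ x ^ s - 1 := by
    have h2 := Real.log_le_sub_one_of_pos hx0
    have h3 : x ^ 1 ≤ x ^ s := pow_le_pow_right₀ hx.le hs
    rw [pow_one] at h3
    linarith
  have hxm : 0 < x ^ m := by positivity
  have h3 : x ^ m * (Real.log x * x ^ m) ≤ x ^ m * ((B + 1) * x ^ d) := by
    have e1 : x ^ (2 * m + r + s) - x ^ (2 * m + r) = x ^ (2 * m + r) * (x ^ s - 1) := by ring
    have e2 : x ^ m * (Real.log x * x ^ m) = x ^ (2 * m) * Real.log x := by ring
    have h4 : x ^ (2 * m) * Real.log x ≤ x ^ (2 * m + r) * (x ^ s - 1) :=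
      mul_le_mul (pow_le_pow_right₀ hx.le (by omega)) h1 hL.le (by positivity)
    have h5 : A * x ^ m ≤ B * x ^ d * x ^ m := mul_le_mul_of_nonneg_right hA hxm.le
    have h6 : x ^ u ≤ x ^ m := pow_le_pow_right₀ hx.le hum
    have h7 : x ^ m ≤ x ^ d * x ^ m := le_mul_of_one_le_left hxm.le (one_le_pow₀ hx.le)
    rw [e2]; linarith
  have h6 := Real.log_le_log (by positivity) (le_of_mul_le_mul_left h3 hxm)
  rw [Real.log_mul (by positivity) (by positivity),
    Real.log_mul (by positivity) (by positivity), Real.log_pow, Real.log_pow] at h6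
  rw [Real.log_mul (by positivity) (by positivity)]
  linarith

lemma tendsto_log_nat : Tendsto (fun m : ℕ => Real.log m) atTop atTop :=
  Real.tendsto_log_atTop.comp tendsto_natCast_atTop_atTop

lemma tendsto_log_log_div :
    Tendsto (fun m : ℕ => Real.log (2 * Real.log m) / Real.log m) atTop (nhds 0) := by
  have h0 : Tendsto (fun y : ℝ => Real.log y / y) atTop (nhds 0) :=
    Real.isLittleO_log_id_atTop.tendsto_div_nhds_zero
  have h1 : Tendsto (fun m : ℕ => 2 * Real.log m) atTop atTop :=
    tendsto_log_nat.const_mul_atTop two_pos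
  have h2 := (h0.comp h1).const_mul 2
  rw [mul_zero] at h2
  refine h2.congr fun m => ?_
  simp only [Function.comp]
  rw [← mul_div_assoc, mul_div_mul_left _ _ two_ne_zero]

/-- The two logarithmic inequalities satisfied by `y = m L` force `m L / log m → 1`. -/
lemma tendsto_of_bounds (L : ℕ → ℝ) (a b d K : ℝ) (hK : 0 ≤ K)
    (hpos : ∀ᶠ m : ℕ in atTop, 0 < L m)
    (hlow : ∀ᶠ m : ℕ in atTop, Real.log m - b - Real.log (m * L m) ≤ (m + a) * L m)
    (hup : ∀ᶠ m : ℕ in atTop, (m - d) * L m + Real.log (m * L m) ≤ Real.log m + K) :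
    Tendsto (fun m : ℕ => m * L m / Real.log m) atTop (nhds 1) := by
  have hlog := tendsto_log_nat
  have hinv : ∀ c : ℝ, Tendsto (fun m : ℕ => c / Real.log m) atTop (nhds 0) :=
    fun c => hlog.const_div_atTop c
  have hm : ∀ c : ℝ, Tendsto (fun m : ℕ => c / (m : ℝ)) atTop (nhds 0) :=
    fun c => tendsto_natCast_atTop_atTop.const_div_atTop c
  -- the summand `1` covers the case `y < 1`, where `log y` is negative
  have hU : Tendsto (fun m : ℕ => 1 / Real.log m + (1 + K / Real.log m) / (1 - d / m))
      atTop (nhds 1) := by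
    have := (hinv 1).add (((hinv K).const_add 1).div ((hm d).const_sub 1) (by norm_num))
    simpa using this
  have hLo : Tendsto (fun m : ℕ =>
      (1 - b / Real.log m - Real.log (2 * Real.log m) / Real.log m) / (1 + a / m))
      atTop (nhds 1) := by
    have := (((hinv b).const_sub 1).sub tendsto_log_log_div).div ((hm a).const_add 1)
      (by norm_num)
    simpa [Pi.div_def] using this
  have hUle : ∀ᶠ m : ℕ in atTop, m * L m / Real.log m
      ≤ 1 / Real.log m + (1 + K / Real.log m) / (1 - d / m) := by
    filter_upwards [hpos, hup, hlog.eventually_gt_atTop 0, eventually_gt_atTop 0,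
      ((hm d).const_sub 1).eventually_const_lt (by norm_num : (0 : ℝ) < 1 - 0)]
      with m h1 h2 h3 h4 h5
    have hm0 : (0 : ℝ) < m := by exact_mod_cast h4
    have hy : 0 < m * L m := by positivity
    have key : m * L m ≤ 1 + (Real.log m + K) / (1 - d / m) := by
      have hnn : 0 ≤ (Real.log m + K) / (1 - d / m) := by positivity
      rcases le_total (m * L m) 1 with h | h
      · linarith
      · have h6 := Real.log_nonneg h
        have h7 : m * L m ≤ (Real.log m + K) / (1 - d / m) := by
          rw [le_div_iff₀ h5]
          have : m * L m * (1 - d / m) = (m - d) * L m := by field_simp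
          linarith
        linarith
    calc m * L m / Real.log m ≤ (1 + (Real.log m + K) / (1 - d / m)) / Real.log m := by gcongr
      _ = _ := by
        have := h5.ne'
        have e : (1 + K / Real.log m) = (Real.log m + K) / Real.log m := by field_simp
        rw [e, add_div, div_div, div_div, mul_comm (Real.log m)]
  refine tendsto_of_tendsto_of_tendsto_of_le_of_le' hLo hU ?_ hUle
  filter_upwards [hpos, hlow, hUle, hU.eventually_lt_const (by norm_num : (1 : ℝ) < 2),
      hlog.eventually_gt_atTop 0, eventually_gt_atTop 0,
      ((hm a).const_add 1).eventually_const_lt (by norm_num : (0 : ℝ) < 1 + 0)]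
    with m h1 h2 h3 h3' h4 h5 h6
  have hm0 : (0 : ℝ) < m := by exact_mod_cast h5
  have hy : 0 < m * L m := by positivity
  have hy2 : m * L m ≤ 2 * Real.log m := by
    rw [← div_le_iff₀ h4]; linarith
  have h7 := Real.log_le_log hy hy2
  rw [div_le_iff₀ h6]
  have e1 : m * L m / Real.log m * (1 + a / m) = (m + a) * L m / Real.log m := by field_simp
  have e2 : 1 - b / Real.log m - Real.log (2 * Real.log m) / Real.log m
      = (Real.log m - b - Real.log (2 * Real.log m)) / Real.log m := by field_simp
  rw [e1, e2]
  gcongr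
  linarith

lemma tendsto_log_affine_div (q v : ℝ) (hq : 0 < q) :
    Tendsto (fun m : ℕ => Real.log (q * m + v) / Real.log m) atTop (nhds 1) := by
  have hm : Tendsto (fun m : ℕ => q + v / (m : ℝ)) atTop (nhds q) := by
    simpa using (tendsto_natCast_atTop_atTop.const_div_atTop v).const_add q
  have h1 := ((hm.log hq.ne').div_atTop tendsto_log_nat).const_add 1
  rw [add_zero] at h1
  refine h1.congr' ?_
  filter_upwards [eventually_gt_atTop 0, hm.eventually_const_lt hq,
    tendsto_log_nat.eventually_gt_atTop 0] with m h2 h3 h4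
  have hm0 : (0 : ℝ) < m := by exact_mod_cast h2
  have e : q * m + v = m * (q + v / m) := by field_simp
  rw [e, Real.log_mul hm0.ne' h3.ne', add_div, div_self h4.ne']

/-- Let `λ_m > 1` be (eventually in `m`) the unique real root greater than `1` of
`P_m(t) = t^(2m+r+s) − t^(2m+r) − Q(t)·t^m − t^u + 1`.  Then for any real `q > 0` and `v`,
`((q·m + v) · log λ_m)/(log(q·m + v)) → q` as `m → ∞`. -/
theorem stmt_4 (r s u : ℕ) (hs : 0 < s) (hu : 0 < u)
    (Q : Polynomial ℝ) (hQ : Q ≠ 0) (hQc : ∀ i : ℕ, ∃ n : ℕ, Q.coeff i = (n : ℝ))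
    (lam : ℕ → ℝ)
    (hlam : ∀ᶠ m : ℕ in atTop, 1 < lam m ∧
      (lam m) ^ (2 * m + r + s) - (lam m) ^ (2 * m + r)
        - Q.eval (lam m) * (lam m) ^ m - (lam m) ^ u + 1 = 0 ∧
      ∀ x : ℝ, 1 < x →
        x ^ (2 * m + r + s) - x ^ (2 * m + r) - Q.eval x * x ^ m - x ^ u + 1 = 0 →
        x = lam m)
    (q v : ℝ) (hq : 0 < q) :
    Tendsto (fun m : ℕ =>
        ((q * m + v) * Real.log (lam m)) / Real.log (q * m + v)) atTop (nhds q) := by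
  have hB : 0 ≤ Q.eval 1 := (eval_bounds Q hQ hQc 1 le_rfl).2.1
  have main : Tendsto (fun m : ℕ => m * Real.log (lam m) / Real.log m) atTop (nhds 1) := by
    refine tendsto_of_bounds (fun m => Real.log (lam m)) (r + s) (Real.log s) Q.natDegree
      (Real.log (Q.eval 1 + 1)) (Real.log_nonneg (by linarith)) ?_ ?_ ?_
    · filter_upwards [hlam] with m h using Real.log_pos h.1
    · filter_upwards [hlam, eventually_gt_atTop 0] with m h hm
      exact root_lower r s u m hs hm _ _ h.1 (eval_bounds Q hQ hQc _ h.1.le).1 h.2.1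
    · filter_upwards [hlam, eventually_gt_atTop 0, eventually_ge_atTop u] with m h hm hum
      exact root_upper r s u m _ hs hm hum _ _ _ h.1 hB (eval_bounds Q hQ hQc _ h.1.le).2.2 h.2.1
  have hm : Tendsto (fun m : ℕ => q + v / (m : ℝ)) atTop (nhds q) := by
    simpa using (tendsto_natCast_atTop_atTop.const_div_atTop v).const_add q
  have h := (hm.mul main).div (tendsto_log_affine_div q v hq) one_ne_zero
  rw [mul_one, div_one] at h
  refine h.congr' ?_
  filter_upwards [eventually_gt_atTop 0, tendsto_log_nat.eventually_gt_atTop 0] with m h2 h4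
  have hm0 : (m : ℝ) ≠ 0 := by exact_mod_cast h2.ne'
  have e : q * m + v = (q + v / m) * m := by field_simp
  simp only [Pi.div_apply]
  rw [← mul_div_assoc, div_div_div_cancel_right₀ h4.ne', ← mul_assoc, ← e]
end

section
/- Fix an integer g ≥ 0 and a real number v, and for each nonnegative integer p let r_{(g,p)} denote the unique real root greater than 1 of B_{(g,p)}(t) = t^{2p+2g+2} − t^{2p+1} − 2t^{p+g+1} − t^{2g+1} + 1. Then the limit as p → ∞ of ((2p + v) · log r_{(g,p)})/(log(2p + v)) equals 2. -/
open Filter Real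

/-!
Write `r = r_{(g,p)}`, `y = r ^ p` and `u = p * log r`, so that `y = exp u`. With
`S = 1 + r + ⋯ + r ^ (2g)` the equation `B_{(g,p)}(r) = 0` reads
`(r - 1) * S * (y ^ 2 * r - 1) = 2 * y * r ^ (g + 1)`. Since `r ^ g ≤ S ≤ (2g + 1) * r ^ (2g)`,
this forces `(r - 1) * (y - 1) ≤ 2` and `2 ≤ (2g + 1) * r ^ g * y * (r - 1)`; Bernoulli's
inequality turns the first bound into `r ≤ 3`, and therefore `y * (r - 1)`, hence also
`y * log r = exp u * u / p`, lies between two positive constants depending only on `g`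
(`root_bounds`). Taking logarithms, `u + log u = log p + O(1)`, which gives `u ~ log p`
(`tendsto_div_of_add_log`), and `log (2p + v) ~ log p` finishes the proof.
-/

/-- The estimate `exp (p log r) * log r ≍ 1` for a root `r > 1` of `B_{(g,p)}`. -/
lemma root_bounds (g p : ℕ) (hp : 1 ≤ p) (r : ℝ) (hr : 1 < r)
    (h : r ^ (2 * p + 2 * g + 2) - r ^ (2 * p + 1) - 2 * r ^ (p + g + 1)
        - r ^ (2 * g + 1) + 1 = 0) :
    2 / (3 * ((2 * g + 1) * 3 ^ g)) ≤ r ^ p * log r ∧ r ^ p * log r ≤ 4 := by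
  have hr0 : 0 < r := by linarith
  have hS := mul_geom_sum r (2 * g + 1)
  set S := ∑ i ∈ Finset.range (2 * g + 1), r ^ i with hSdef
  have hS1 : r ^ g ≤ S :=
    Finset.single_le_sum (f := fun i => r ^ i) (fun i _ => by positivity)
      (Finset.mem_range.2 (by omega))
  have hS2 : S ≤ (2 * g + 1) * (r ^ g) ^ 2 := by
    have : S ≤ ∑ i ∈ Finset.range (2 * g + 1), r ^ (2 * g) :=
      Finset.sum_le_sum fun i hi =>
        pow_le_pow_right₀ hr.le (by have := Finset.mem_range.1 hi; omega)
    rw [Finset.sum_const, Finset.card_range, nsmul_eq_mul, mul_comm 2 g, pow_mul] at this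
    push_cast at this
    linarith
  have hbern : 1 + (p : ℝ) * (r - 1) ≤ r ^ p := by
    have := one_add_mul_le_pow (a := r - 1) (by linarith) p
    simpa using this
  have hRy : r ^ (2 * g + 1) = (r ^ g) ^ 2 * r := by ring
  have hR : 1 ≤ r ^ g := one_le_pow₀ hr.le
  have hp1 : (1 : ℝ) ≤ p := by exact_mod_cast hp
  have heq : (r - 1) * S * (r * (r ^ p) ^ 2 - 1) = 2 * r ^ p * (r * r ^ g) := by
    rw [hS]; linear_combination h
  have hlog1 : log r ≤ r - 1 := log_le_sub_one_of_pos hr0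
  have hlog2 : (r - 1) / r ≤ log r := by
    have := one_sub_inv_le_log_of_pos hr0
    have e : (r - 1) / r = 1 - r⁻¹ := by field_simp
    rw [e]; exact this
  have hR3 : r ≤ 3 → r ^ g ≤ 3 ^ g := fun h3 => pow_le_pow_left₀ hr0.le h3 g
  clear hRy h hSdef hS
  generalize r ^ p = y at *
  generalize r ^ g = R at *
  have hd : 0 < r - 1 := by linarith
  have hy : 1 ≤ y := by nlinarith
  have hyr : 1 ≤ y * r := by nlinarith
  have h1 : (r - 1) * (y - 1) ≤ 2 := by
    have a1 : y * r * (y - 1) ≤ r * y ^ 2 - 1 := by nlinarith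
    have a0 : 0 ≤ y * r * (y - 1) := mul_nonneg (by linarith) (by linarith)
    have a2 : (r - 1) * R * (y * r * (y - 1)) ≤ (r - 1) * S * (r * y ^ 2 - 1) := by
      gcongr
    rw [heq] at a2
    have a3 : 0 < R * (y * r) := by positivity
    refine le_of_mul_le_mul_right ?_ a3
    linarith
  have h3 : r ≤ 3 := by
    have : r - 1 ≤ y - 1 := by nlinarith
    nlinarith
  have hR3 := hR3 h3
  have h2 : 2 ≤ (2 * g + 1) * R * (y * (r - 1)) := by
    have a2 : (r - 1) * S * (r * y ^ 2 - 1) ≤ (r - 1) * ((2 * g + 1) * R ^ 2) * (r * y ^ 2) := by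
      gcongr
      · nlinarith
      · linarith
    rw [heq] at a2
    have a3 : 0 < R * (y * r) := by positivity
    refine le_of_mul_le_mul_right ?_ a3
    linarith
  have h2' : 2 ≤ (2 * g + 1) * 3 ^ g * (y * (r - 1)) := by
    refine h2.trans ?_
    have : 0 ≤ y * (r - 1) := by positivity
    gcongr
  have hlog3 : (r - 1) / 3 ≤ log r := le_trans (by gcongr) hlog2
  constructor
  · rw [div_le_iff₀ (by positivity)]
    calc (2 : ℝ) ≤ (2 * g + 1) * 3 ^ g * (y * (r - 1)) := h2'
      _ = y * ((r - 1) / 3) * (3 * ((2 * g + 1) * 3 ^ g)) := by ring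
      _ ≤ _ := by gcongr
  · calc y * log r ≤ y * (r - 1) := by gcongr
      _ ≤ 4 := by linarith

/-- If `u > 0` and `u + log u = ℓ + O(1)` with `ℓ → ∞`, then `u ~ ℓ`. -/
lemma tendsto_div_of_add_log (u l : ℕ → ℝ) (a b : ℝ) (hl : Tendsto l atTop atTop)
    (hu : ∀ᶠ n in atTop, 0 < u n)
    (ha : ∀ᶠ n in atTop, l n + a ≤ u n + log (u n))
    (hb : ∀ᶠ n in atTop, u n + log (u n) ≤ l n + b) :
    Tendsto (fun n => u n / l n) atTop (nhds 1) := by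
  have hutop : Tendsto u atTop atTop := by
    have h1 : Tendsto (fun n => (l n + a) / 2) atTop atTop :=
      (tendsto_atTop_add_const_right _ a hl).atTop_div_const (by norm_num)
    refine tendsto_atTop_mono' _ ?_ h1
    filter_upwards [hu, ha] with n h0 h
    have := log_le_sub_one_of_pos h0
    linarith
  have hlpos := hl.eventually_gt_atTop 0
  have hc (c : ℝ) : Tendsto (fun n => 1 + c / l n) atTop (nhds 1) := by
    simpa using (hl.const_div_atTop c).const_add 1
  have hq : Tendsto (fun n => (u n + log (u n)) / l n) atTop (nhds 1) := by
    refine tendsto_of_tendsto_of_tendsto_of_le_of_le' (hc a) (hc b) ?_ ?_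
    · filter_upwards [ha, hlpos] with n h h0
      rw [le_div_iff₀ h0, add_mul, div_mul_cancel₀ _ h0.ne']; linarith
    · filter_upwards [hb, hlpos] with n h h0
      rw [div_le_iff₀ h0, add_mul, div_mul_cancel₀ _ h0.ne']; linarith
  have hlogu : Tendsto (fun n => 1 + log (u n) / u n) atTop (nhds 1) := by
    have := (isLittleO_log_id_atTop.tendsto_div_nhds_zero.comp hutop).const_add 1
    simpa using this
  have := hq.div hlogu one_ne_zero
  rw [div_one] at this
  refine this.congr' ?_
  filter_upwards [hutop.eventually_gt_atTop 1, hlpos] with n h h0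
  have hlg : 0 < log (u n) := log_pos h
  have hu0 : 0 < u n := by linarith
  simp only [Pi.div_apply]
  field_simp

lemma tendsto_log_ratio (v : ℝ) :
    Tendsto (fun p : ℕ => log (2 * (p : ℝ) + v) / log p) atTop (nhds 1) := by
  have hcast : Tendsto (fun p : ℕ => (p : ℝ)) atTop atTop := tendsto_natCast_atTop_atTop
  have hl := tendsto_log_atTop.comp hcast
  have h1 : Tendsto (fun p : ℕ => 2 + v / (p : ℝ)) atTop (nhds 2) := by
    simpa using (hcast.const_div_atTop v).const_add 2
  have h2 := ((h1.log two_ne_zero).div_atTop hl).const_add 1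
  rw [add_zero] at h2
  refine h2.congr' ?_
  filter_upwards [hcast.eventually_gt_atTop 0, hl.eventually_gt_atTop 0,
    h1.eventually (lt_mem_nhds (by norm_num : (0 : ℝ) < 2))] with p hp hlp hpos
  have e : 2 * (p : ℝ) + v = p * (2 + v / p) := by field_simp
  simp only [Function.comp_apply] at *
  rw [e, log_mul hp.ne' hpos.ne', add_div, div_self hlp.ne']

/-- Fix `g ≥ 0` and a real `v`, and for each `p` let `r_{(g,p)} > 1` be the unique real
root greater than `1` of `B_{(g,p)}(t) = t^(2p+2g+2) − t^(2p+1) − 2t^(p+g+1) − t^(2g+1) + 1`.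
Then `((2p + v) · log r_{(g,p)})/(log(2p + v)) → 2` as `p → ∞`. -/
theorem stmt_14 (g : ℕ) (v : ℝ) (rt : ℕ → ℝ)
    (hroot : ∀ p : ℕ, 1 < rt p ∧
      (rt p) ^ (2 * p + 2 * g + 2) - (rt p) ^ (2 * p + 1) - 2 * (rt p) ^ (p + g + 1)
        - (rt p) ^ (2 * g + 1) + 1 = 0 ∧
      ∀ t : ℝ, 1 < t →
        t ^ (2 * p + 2 * g + 2) - t ^ (2 * p + 1) - 2 * t ^ (p + g + 1)
          - t ^ (2 * g + 1) + 1 = 0 → t = rt p) :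
    Tendsto (fun p : ℕ =>
        ((2 * (p : ℝ) + v) * Real.log (rt p)) / Real.log (2 * (p : ℝ) + v))
      atTop (nhds 2) := by
  have hcast : Tendsto (fun p : ℕ => (p : ℝ)) atTop atTop := tendsto_natCast_atTop_atTop
  have hl : Tendsto (fun p : ℕ => log (p : ℝ)) atTop atTop := tendsto_log_atTop.comp hcast
  set c : ℝ := 2 / (3 * ((2 * g + 1) * 3 ^ g)) with hc
  have hc0 : 0 < c := by positivity
  -- Logarithm of `r ^ p * log r`, in terms of `u = p * log r`.
  have key : ∀ p : ℕ, 1 ≤ p → 0 < (p : ℝ) * log (rt p) ∧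
      log (rt p ^ p * log (rt p)) =
        (p : ℝ) * log (rt p) + log ((p : ℝ) * log (rt p)) - log p := by
    intro p hp
    have hr := (hroot p).1
    have hL : 0 < log (rt p) := log_pos hr
    have hp0 : (0 : ℝ) < p := by exact_mod_cast hp
    refine ⟨by positivity, ?_⟩
    rw [log_mul (pow_pos (by linarith) p).ne' hL.ne', log_mul hp0.ne' hL.ne', log_pow]
    ring
  have hu : Tendsto (fun p : ℕ => (p : ℝ) * log (rt p) / log p) atTop (nhds 1) := by
    refine tendsto_div_of_add_log _ _ (log c) (log 4) hl ?_ ?_ ?_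
    · filter_upwards [eventually_ge_atTop 1] with p hp using (key p hp).1
    · filter_upwards [eventually_ge_atTop 1] with p hp
      have hb := (root_bounds g p hp _ (hroot p).1 (hroot p).2.1).1
      have := log_le_log hc0 hb
      linarith [(key p hp).2]
    · filter_upwards [eventually_ge_atTop 1] with p hp
      have hb := root_bounds g p hp _ (hroot p).1 (hroot p).2.1
      have := log_le_log (hc0.trans_le hb.1) hb.2
      linarith [(key p hp).2]
  have h2 : Tendsto (fun p : ℕ => 2 + v / (p : ℝ)) atTop (nhds 2) := by
    simpa using (hcast.const_div_atTop v).const_add 2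
  have hfin := h2.mul (hu.div (tendsto_log_ratio v) one_ne_zero)
  rw [div_one, mul_one] at hfin
  refine hfin.congr' ?_
  filter_upwards [hcast.eventually_gt_atTop 0, hl.eventually_gt_atTop 0] with p hp hlp
  simp only [Pi.div_apply]
  rw [div_div_div_cancel_right₀ hlp.ne', ← mul_div_assoc]
  congr 1
  field_simp
end
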